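/- arXiv:2512.00386 — 3 statements merged into one kernel-verified Lean document; each statement's English description precedes it below -/
import Mathlib

section
/- Let f : ℝ^d → ℝ be differentiable and m-strongly convex with m > 0, and suppose ∇f is continuous. Let w : [0,∞) → ℝ^d be any function, and let u, v : [0,∞) → ℝ^d be continuous paths satisfying u(t) = u(0) + w(t) − ∫₀ᵗ ∇f(u(s)) ds and v(t) = v(0) + w(t) − ∫₀ᵗ ∇f(v(s)) ds for all t ≥ 0 (with the same w). Then ‖u(t) − v(t)‖ ≤ e^{−mt}·‖u(0) − v(0)‖ for all t ≥ 0. -/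
open Metric RealInnerProductSpace

open Set

/-- If every first-order expansion of `f`, with `g` in the role of the gradient, bounds `f` from
below up to a quadratic gain, then `g` is strongly monotone. -/
theorem strongly_monotone_of_quadratic_lower_bound {E : Type*} [NormedAddCommGroup E]
    [InnerProductSpace ℝ E] {m : ℝ} {f : E → ℝ} {g : E → E}
    (h : ∀ x y, f y ≥ f x + ⟪g x, y - x⟫ + m / 2 * ‖y - x‖ ^ 2) (x y : E) :
    m * ‖x - y‖ ^ 2 ≤ ⟪x - y, g x - g y⟫ := by
  have hxy := h x y
  have hyx := h y x
  rw [← neg_sub x y, inner_neg_right, norm_neg] at hxy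
  rw [real_inner_comm, inner_sub_left]
  linarith

/-- An integral curve equation with continuous integrand on `[0, ∞)` can be differentiated at
positive times. -/
theorem hasDerivAt_of_eq_sub_integral {E : Type*} [NormedAddCommGroup E] [NormedSpace ℝ E]
    [CompleteSpace E] {z g : ℝ → E} (hg : ContinuousOn g (Ici 0))
    (hz : ∀ t ≥ (0 : ℝ), z t = z 0 - ∫ s in (0 : ℝ)..t, g s) {t : ℝ} (ht : 0 < t) :
    HasDerivAt z (-g t) t := by
  have hint : IntervalIntegrable g MeasureTheory.volume 0 t :=
    (hg.mono (by rw [uIcc_of_le ht.le]; exact Icc_subset_Ici_self)).intervalIntegrable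
  have hderiv := intervalIntegral.integral_hasDerivAt_right hint
    ((hg.mono Ioi_subset_Ici_self).stronglyMeasurableAtFilter isOpen_Ioi t ht)
    (hg.continuousAt (Ici_mem_nhds ht))
  refine (hderiv.const_sub (z 0)).congr_of_eventuallyEq ?_
  filter_upwards [Ici_mem_nhds ht] with s hs using hz s hs

/-- A curve whose velocity is dissipative with rate `m` decays exponentially with rate `m`. -/
theorem norm_le_exp_mul_of_inner_deriv_le {E : Type*} [NormedAddCommGroup E]
    [InnerProductSpace ℝ E] {m : ℝ} {z z' : ℝ → E} (hz : ContinuousOn z (Ici 0))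
    (hz' : ∀ t > 0, HasDerivAt z (z' t) t)
    (hdiss : ∀ t > 0, ⟪z t, z' t⟫ ≤ -m * ‖z t‖ ^ 2) {t : ℝ} (ht : 0 ≤ t) :
    ‖z t‖ ≤ Real.exp (-m * t) * ‖z 0‖ := by
  have hderiv : ∀ s > 0, HasDerivAt (fun s => Real.exp (2 * m * s) * ‖z s‖ ^ 2)
      (Real.exp (2 * m * s) * (2 * m) * ‖z s‖ ^ 2
        + Real.exp (2 * m * s) * (2 * ⟪z s, z' s⟫)) s := fun s hs => by
    have hexp : HasDerivAt (fun s => Real.exp (2 * m * s)) (Real.exp (2 * m * s) * (2 * m)) s :=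
      (hasDerivAt_const_mul (2 * m)).exp
    exact hexp.mul (hz' s hs).norm_sq
  have hanti : AntitoneOn (fun s => Real.exp (2 * m * s) * ‖z s‖ ^ 2) (Ici 0) := by
    refine antitoneOn_of_deriv_nonpos (convex_Ici 0) (by fun_prop) ?_ ?_
    · rw [interior_Ici]
      exact fun s hs => (hderiv s hs).differentiableAt.differentiableWithinAt
    · rw [interior_Ici]
      intro s hs
      rw [(hderiv s hs).deriv]
      nlinarith [hdiss s hs, Real.exp_pos (2 * m * s)]
  have hle : Real.exp (2 * m * t) * ‖z t‖ ^ 2 ≤ ‖z 0‖ ^ 2 := by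
    simpa using hanti self_mem_Ici ht ht
  have hexp : Real.exp (2 * m * t) = Real.exp (m * t) ^ 2 := by
    rw [← Real.exp_nat_mul]
    push_cast
    ring_nf
  rw [hexp, ← mul_pow] at hle
  have hroot := (pow_le_pow_iff_left₀ (by positivity) (norm_nonneg _) two_ne_zero).1 hle
  rwa [neg_mul, Real.exp_neg, inv_mul_eq_div, le_div_iff₀' (Real.exp_pos _)]

/-- Pathwise synchronous-coupling contraction: two solutions of the ODE/SDE
`x(t) = x(0) + w(t) - ∫₀ᵗ ∇f(x(s)) ds` driven by the same path `w`, with `f`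
`m`-strongly convex, contract at exponential rate `e^{-mt}`. -/
theorem synchronous_coupling_contraction
    {d : ℕ} (m : ℝ) (hm : 0 < m)
    (f : EuclideanSpace ℝ (Fin d) → ℝ) (hf : Differentiable ℝ f)
    (hfsc : ∀ x y : EuclideanSpace ℝ (Fin d),
      f y ≥ f x + ⟪gradient f x, y - x⟫ + m / 2 * ‖y - x‖ ^ 2)
    (hfgrad : Continuous (gradient f))
    (w u v : ℝ → EuclideanSpace ℝ (Fin d))
    (hu : ContinuousOn u (Set.Ici 0)) (hv : ContinuousOn v (Set.Ici 0))
    (hueq : ∀ t ≥ (0 : ℝ), u t = u 0 + w t - ∫ s in (0 : ℝ)..t, gradient f (u s))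
    (hveq : ∀ t ≥ (0 : ℝ), v t = v 0 + w t - ∫ s in (0 : ℝ)..t, gradient f (v s)) :
    ∀ t ≥ (0 : ℝ), ‖u t - v t‖ ≤ Real.exp (-m * t) * ‖u 0 - v 0‖ := by
  have hgu : ContinuousOn (fun s => gradient f (u s)) (Ici 0) := hfgrad.comp_continuousOn hu
  have hgv : ContinuousOn (fun s => gradient f (v s)) (Ici 0) := hfgrad.comp_continuousOn hv
  have hdiff : ∀ t ≥ (0 : ℝ), u t - v t
      = u 0 - v 0 - ∫ s in (0 : ℝ)..t, (gradient f (u s) - gradient f (v s)) := by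
    intro t ht
    have hsub : uIcc 0 t ⊆ Ici 0 := by
      rw [uIcc_of_le ht]
      exact Icc_subset_Ici_self
    rw [intervalIntegral.integral_sub (hgu.mono hsub).intervalIntegrable
      (hgv.mono hsub).intervalIntegrable]
    conv_lhs => rw [hueq t ht, hveq t ht]
    abel
  intro t ht
  refine norm_le_exp_mul_of_inner_deriv_le (z := fun s => u s - v s) (hu.sub hv)
    (fun s hs => hasDerivAt_of_eq_sub_integral (hgu.sub hgv) hdiff hs) (fun s _ => ?_) ht
  have hmono := strongly_monotone_of_quadratic_lower_bound hfsc (u s) (v s)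
  simp only [inner_neg_right, Pi.sub_apply]
  linarith
end

section
/- Let D be a nonempty closed convex subset of ℝ^d, let g : ℝ^d → ℝ be continuous and m-strongly convex with m > 0, let σ > 0, and for n ≥ 1 set f_n(x) = g(x) + (n/2)·dist(x,D)² and Z^n = ∫_{ℝ^d} exp(−(2/σ²)f_n(x)) dx. Then lim_{n→∞} Z^n = ∫_D exp(−(2/σ²)·g(x)) dx. -/
open MeasureTheory Metric Filter

section

variable {V : Type*} [NormedAddCommGroup V] [InnerProductSpace ℝ V]

/-- A continuous strongly convex function is bounded below by a quadratic function. -/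
lemma StrongConvexOn.exists_quadratic_le [CompleteSpace V] {m : ℝ} {g : V → ℝ}
    (hg : StrongConvexOn Set.univ m g) (hgc : Continuous g) :
    ∃ (w : V) (c : ℝ), ∀ x, m / 2 * ‖x‖ ^ 2 + inner ℝ w x + c ≤ g x := by
  have hcont : Continuous fun x ↦ g x - m / 2 * ‖x‖ ^ 2 := by fun_prop
  obtain ⟨l, c, hlc, -⟩ := ConvexOn.exists_affine_le_of_lt (𝕜 := ℝ) (Set.mem_univ (0 : V))
    (sub_one_lt _) isClosed_univ (hcont.lowerSemicontinuous.lowerSemicontinuousOn _)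
    (strongConvexOn_iff_convex.1 hg)
  refine ⟨(InnerProductSpace.toDual ℝ V).symm l, c, fun x ↦ ?_⟩
  have hx : l x + c ≤ g x - m / 2 * ‖x‖ ^ 2 := by simpa using hlc ⟨x, Set.mem_univ x⟩
  rw [InnerProductSpace.toDual_symm_apply]
  linarith

variable [FiniteDimensional ℝ V] [MeasurableSpace V] [BorelSpace V]

lemma integrable_rexp_neg_mul_sq_norm_add_inner {b : ℝ} (hb : 0 < b) (c : ℝ) (w : V) :
    Integrable fun v : V ↦ Real.exp (-b * ‖v‖ ^ 2 + c * inner ℝ w v) := by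
  refine (GaussianFourier.integrable_cexp_neg_mul_sq_norm_add (b := (b : ℂ)) (by simpa using hb)
    (c : ℂ) w).norm.congr (.of_forall fun v ↦ ?_)
  simp only [Complex.norm_exp]
  norm_cast

/-- The Gibbs density of a continuous strongly convex potential is integrable. -/
lemma StrongConvexOn.integrable_exp_neg_mul {m : ℝ} (hm : 0 < m) {g : V → ℝ}
    (hg : StrongConvexOn Set.univ m g) (hgc : Continuous g) {t : ℝ} (ht : 0 < t) :
    Integrable fun x ↦ Real.exp (-t * g x) := by
  obtain ⟨w, c, h⟩ := hg.exists_quadratic_le hgc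
  refine ((integrable_rexp_neg_mul_sq_norm_add_inner (b := t * (m / 2)) (by positivity) (-t)
    w).mul_const (Real.exp (-t * c))).mono' (by fun_prop) (.of_forall fun x ↦ ?_)
  rw [Real.norm_eq_abs, Real.abs_exp, ← Real.exp_add, Real.exp_le_exp]
  linarith [mul_le_mul_of_nonneg_left (h x) ht.le]

end

/-- The penalized Gibbs densities converge pointwise to the Gibbs density restricted to `D`. -/
lemma tendsto_exp_neg_mul_add_infDist {X : Type*} [PseudoMetricSpace X] {D : Set X}
    (hDne : D.Nonempty) (hD : IsClosed D) (g : X → ℝ) {t : ℝ} (ht : 0 < t) (x : X) :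
    Tendsto (fun n : ℕ ↦ Real.exp (-t * (g x + (n : ℝ) / 2 * infDist x D ^ 2))) atTop
      (nhds (D.indicator (fun y ↦ Real.exp (-t * g y)) x)) := by
  by_cases hx : x ∈ D
  · simp [hx, infDist_zero_of_mem hx]
  · rw [Set.indicator_of_notMem hx]
    have hpos : 0 < infDist x D := (hD.notMem_iff_infDist_pos hDne).1 hx
    refine Real.tendsto_exp_atBot.comp (Tendsto.const_mul_atTop_of_neg (neg_lt_zero.2 ht) ?_)
    exact tendsto_atTop_add_const_left _ _
      ((tendsto_natCast_atTop_atTop.atTop_div_const two_pos).atTop_mul_const (by positivity))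

/-- Convergence of the Gibbs normalizing constants: under strong convexity of
`g`, `Z^n = ∫ exp(−(2/σ²) f_n) dx` converges to `∫_D exp(−(2/σ²) g) dx`. -/
theorem penalized_normalizing_constants_tendsto
    {d : ℕ} (D : Set (EuclideanSpace ℝ (Fin d)))
    (hDne : D.Nonempty) (hDclosed : IsClosed D) (hDconv : Convex ℝ D)
    (g : EuclideanSpace ℝ (Fin d) → ℝ) (hgc : Continuous g)
    (m : ℝ) (hm : 0 < m) (hgsc : StrongConvexOn Set.univ m g)
    (σ : ℝ) (hσ : 0 < σ)
    (fn : ℕ → EuclideanSpace ℝ (Fin d) → ℝ)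
    (hfn : ∀ n x, fn n x = g x + (n : ℝ) / 2 * (infDist x D) ^ 2)
    (Z : ℕ → ℝ)
    (hZ : ∀ n, Z n = ∫ x : EuclideanSpace ℝ (Fin d), Real.exp (-(2 / σ ^ 2) * fn n x)) :
    Tendsto Z atTop
      (nhds (∫ x in D, Real.exp (-(2 / σ ^ 2) * g x))) := by
  obtain rfl : Z = _ := funext hZ
  simp only [hfn]
  have ht : 0 < 2 / σ ^ 2 := by positivity
  rw [← integral_indicator hDclosed.measurableSet]
  refine tendsto_integral_of_dominated_convergence (fun x ↦ Real.exp (-(2 / σ ^ 2) * g x))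
    (fun n ↦ ?_) (hgsc.integrable_exp_neg_mul hm hgc ht) (fun n ↦ .of_forall fun x ↦ ?_)
    (.of_forall fun x ↦ tendsto_exp_neg_mul_add_infDist hDne hDclosed g ht x)
  · have := continuous_infDist_pt D
    exact Continuous.aestronglyMeasurable (by fun_prop)
  · rw [Real.norm_eq_abs, Real.abs_exp, Real.exp_le_exp]
    have : 0 ≤ (n : ℝ) / 2 * infDist x D ^ 2 := by positivity
    exact mul_le_mul_of_nonpos_left (by linarith) (by linarith)
end

section
/- Let D be a nonempty closed convex subset of ℝ^d with nonempty interior, let g : ℝ^d → ℝ be continuous and m-strongly convex with m > 0, let σ > 0, and for n ≥ 1 let π^n be the probability measure with Lebesgue density exp(−(2/σ²)f_n)/Z^n, where f_n(x) = g(x) + (n/2)·dist(x,D)² and Z^n = ∫ exp(−(2/σ²)f_n) dx. Let π be the probability measure with Lebesgue density exp(−(2/σ²)g)·1_D/Z_D, where Z_D = ∫_D exp(−(2/σ²)g) dx. Then the second moments converge: ∫_{ℝ^d} ‖x‖² dπ^n(x) → ∫_{ℝ^d} ‖x‖² dπ(x) as n → ∞. -/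
open MeasureTheory Metric Filter

/-- A continuous strongly convex function on a proper space grows at least quadratically. -/
theorem StrongConvexOn.exists_quadratic_lower_bound {E : Type*} [NormedAddCommGroup E]
    [NormedSpace ℝ E] [ProperSpace E] {g : E → ℝ} {m : ℝ} (hm : 0 < m)
    (hg : StrongConvexOn Set.univ m g) (hgc : Continuous g) :
    ∃ C : ℝ, ∀ x, m / 4 * ‖x‖ ^ 2 - C ≤ g x := by
  obtain ⟨B, hB⟩ := (isCompact_closedBall (0 : E) 1).exists_bound_of_continuousOn
    hgc.continuousOn
  have hB0 : |g 0| ≤ B := by simpa using hB 0 (by simp)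
  have hBnn : 0 ≤ B := (abs_nonneg _).trans hB0
  refine ⟨(2 * B + m / 2) ^ 2 / m + B + m, fun x => ?_⟩
  have hsq : 0 ≤ (2 * B + m / 2) ^ 2 / m := by positivity
  rcases le_total ‖x‖ 1 with hx | hx
  · have h1 : |g x| ≤ B := by simpa using hB x (by simpa using hx)
    have h2 := (abs_le.1 h1).1
    have h3 : ‖x‖ ^ 2 ≤ 1 := pow_le_one₀ (norm_nonneg _) hx
    nlinarith
  · have hpos : 0 < ‖x‖ := by linarith
    have ht1 : ‖x‖⁻¹ ≤ 1 := inv_le_one_of_one_le₀ hx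
    have hu : |g (‖x‖⁻¹ • x)| ≤ B := by
      simpa using hB (‖x‖⁻¹ • x) (by simp [norm_smul, hpos.ne'])
    have h := hg.2 (Set.mem_univ x) (Set.mem_univ (0 : E)) (inv_nonneg.2 hpos.le)
      (sub_nonneg.2 ht1) (by ring)
    simp only [smul_zero, add_zero, sub_zero, smul_eq_mul] at h
    have key : ‖x‖ * g (‖x‖⁻¹ • x) ≤ g x + (‖x‖ - 1) * g 0 - (‖x‖ - 1) * (m / 2 * ‖x‖) := by
      refine (mul_le_mul_of_nonneg_left h hpos.le).trans (le_of_eq ?_)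
      field_simp
    have h1 : -B ≤ g (‖x‖⁻¹ • x) := (abs_le.1 hu).1
    have h2 : g 0 ≤ B := (abs_le.1 hB0).2
    have h3 : ‖x‖ * -B ≤ ‖x‖ * g (‖x‖⁻¹ • x) := mul_le_mul_of_nonneg_left h1 hpos.le
    have h4 : (‖x‖ - 1) * g 0 ≤ (‖x‖ - 1) * B :=
      mul_le_mul_of_nonneg_left h2 (by linarith)
    have h5 : (2 * B + m / 2) * ‖x‖ ≤ m / 4 * ‖x‖ ^ 2 + (2 * B + m / 2) ^ 2 / m := by
      have : 0 ≤ (m / 2 * ‖x‖ - (2 * B + m / 2)) ^ 2 / m := by positivity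
      have e : (m / 2 * ‖x‖ - (2 * B + m / 2)) ^ 2 / m = m / 4 * ‖x‖ ^ 2
          + (2 * B + m / 2) ^ 2 / m - (2 * B + m / 2) * ‖x‖ := by
        field_simp
        ring
      linarith
    nlinarith

section Gaussian

variable {V : Type*} [NormedAddCommGroup V] [InnerProductSpace ℝ V] [FiniteDimensional ℝ V]
  [MeasurableSpace V] [BorelSpace V]

theorem integrable_exp_neg_mul_norm_sq {b : ℝ} (hb : 0 < b) :
    Integrable (fun x : V => Real.exp (-b * ‖x‖ ^ 2)) := by
  have h := (GaussianFourier.integrable_cexp_neg_mul_sq_norm_add (V := V) (b := (b : ℂ))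
    (by simpa using hb) 0 0).norm
  refine h.congr (Eventually.of_forall fun x => ?_)
  simp [Complex.norm_exp, ← Complex.ofReal_pow]

theorem integrable_one_add_norm_sq_mul_exp_neg {g : V → ℝ} (hgc : Continuous g) {a C c : ℝ}
    (ha : 0 < a) (hc : 0 < c) (hg : ∀ x, a * ‖x‖ ^ 2 - C ≤ g x) :
    Integrable (fun x : V => (1 + ‖x‖ ^ 2) * Real.exp (-c * g x)) := by
  have hk : 0 < c * a / 2 := by positivity
  refine ((integrable_exp_neg_mul_norm_sq (V := V) hk).const_mul
    ((1 + (c * a / 2)⁻¹) * Real.exp (c * C))).mono' (by fun_prop)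
    (Eventually.of_forall fun x => ?_)
  rw [Real.norm_of_nonneg (by positivity)]
  have h1 : 1 + ‖x‖ ^ 2 ≤ (1 + (c * a / 2)⁻¹) * Real.exp (c * a / 2 * ‖x‖ ^ 2) := by
    have e := Real.add_one_le_exp (c * a / 2 * ‖x‖ ^ 2)
    have e1 : 1 + ‖x‖ ^ 2 ≤ (1 + (c * a / 2)⁻¹) * (c * a / 2 * ‖x‖ ^ 2 + 1) := by
      have : (1 + (c * a / 2)⁻¹) * (c * a / 2 * ‖x‖ ^ 2 + 1)
          = 1 + ‖x‖ ^ 2 + (c * a / 2 * ‖x‖ ^ 2 + (c * a / 2)⁻¹) := by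
        field_simp
        ring
      rw [this]
      have : 0 ≤ c * a / 2 * ‖x‖ ^ 2 + (c * a / 2)⁻¹ := by positivity
      linarith
    exact e1.trans (mul_le_mul_of_nonneg_left e (by positivity))
  have h2 : Real.exp (-c * g x) ≤ Real.exp (c * C - c * a * ‖x‖ ^ 2) := by
    apply Real.exp_le_exp.2
    nlinarith [mul_le_mul_of_nonneg_left (hg x) hc.le]
  calc (1 + ‖x‖ ^ 2) * Real.exp (-c * g x)
      ≤ ((1 + (c * a / 2)⁻¹) * Real.exp (c * a / 2 * ‖x‖ ^ 2))
        * Real.exp (c * C - c * a * ‖x‖ ^ 2) := by gcongr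
    _ = (1 + (c * a / 2)⁻¹) * Real.exp (c * C) * Real.exp (-(c * a / 2) * ‖x‖ ^ 2) := by
      rw [mul_assoc (_ + _), mul_assoc (_ + _), ← Real.exp_add, ← Real.exp_add]
      ring_nf

end Gaussian

/-- Quadratic penalization of the distance to a closed set concentrates integrals on that set. -/
theorem tendsto_integral_mul_exp_neg_penalized {E : Type*} [PseudoMetricSpace E]
    [MeasurableSpace E] [BorelSpace E] {μ : Measure E} {D : Set E} (hDne : D.Nonempty)
    (hD : IsClosed D) {g h : E → ℝ} (hg : Measurable g) (hh : Measurable h) {c : ℝ} (hc : 0 < c)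
    (hint : Integrable (fun x => h x * Real.exp (-c * g x)) μ) :
    Tendsto (fun n : ℕ => ∫ x, h x * Real.exp (-c * (g x + (n : ℝ) / 2 * infDist x D ^ 2)) ∂μ)
      atTop (nhds (∫ x, h x * D.indicator (fun y => Real.exp (-c * g y)) x ∂μ)) := by
  refine tendsto_integral_of_dominated_convergence _ (fun n => ?_) hint.norm (fun n => ?_) ?_
  · have := measurable_infDist (s := D)
    exact Measurable.aestronglyMeasurable (by fun_prop)
  · refine Eventually.of_forall fun x => ?_
    rw [norm_mul, norm_mul, Real.norm_of_nonneg (Real.exp_pos _).le,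
      Real.norm_of_nonneg (Real.exp_pos _).le]
    refine mul_le_mul_of_nonneg_left (Real.exp_le_exp.2 ?_) (norm_nonneg _)
    have : 0 ≤ c * ((n : ℝ) / 2 * infDist x D ^ 2) := by positivity
    linarith
  · refine Eventually.of_forall fun x => Tendsto.const_mul _ ?_
    by_cases hx : x ∈ D
    · simp [hx, infDist_zero_of_mem hx]
    · rw [Set.indicator_of_notMem hx]
      have hpos : 0 < infDist x D := (hD.notMem_iff_infDist_pos hDne).1 hx
      refine Real.tendsto_exp_atBot.comp ?_
      refine Tendsto.const_mul_atTop_of_neg (neg_lt_zero.2 hc) ?_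
      refine tendsto_atTop_add_const_left _ _ ?_
      exact (tendsto_natCast_atTop_atTop.atTop_div_const two_pos).atTop_mul_const (by positivity)

theorem integral_withDensity_ofReal_div {E : Type*} [MeasurableSpace E] {μ : Measure E}
    {ρ : E → ℝ} (hρ : Measurable ρ) (hρ0 : 0 ≤ ρ) {Z : ℝ} (hZ : 0 ≤ Z) (h : E → ℝ) :
    ∫ x, h x ∂μ.withDensity (fun x => ENNReal.ofReal (ρ x / Z)) = (∫ x, h x * ρ x ∂μ) / Z := by
  rw [integral_withDensity_eq_integral_toReal_smul (by fun_prop)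
    (Eventually.of_forall fun _ => ENNReal.ofReal_lt_top), ← integral_div]
  refine integral_congr_ae (Eventually.of_forall fun x => ?_)
  simp only [ENNReal.toReal_ofReal (div_nonneg (hρ0 x) hZ), smul_eq_mul]
  ring

/-- Convergence of second moments of the penalized Gibbs measures `π^n` to the
second moment of the truncated Gibbs measure `π` on `D`. -/
theorem penalized_gibbs_second_moment_convergence
    {d : ℕ} (D : Set (EuclideanSpace ℝ (Fin d)))
    (hDne : D.Nonempty) (hDclosed : IsClosed D) (hDconv : Convex ℝ D)
    (hDint : (interior D).Nonempty)
    (g : EuclideanSpace ℝ (Fin d) → ℝ) (hgc : Continuous g)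
    (m : ℝ) (hm : 0 < m) (hgsc : StrongConvexOn Set.univ m g)
    (σ : ℝ) (hσ : 0 < σ)
    (fn : ℕ → EuclideanSpace ℝ (Fin d) → ℝ)
    (hfn : ∀ n x, fn n x = g x + (n : ℝ) / 2 * (infDist x D) ^ 2)
    (Z : ℕ → ℝ)
    (hZ : ∀ n, Z n = ∫ x : EuclideanSpace ℝ (Fin d), Real.exp (-(2 / σ ^ 2) * fn n x))
    (π' : ℕ → Measure (EuclideanSpace ℝ (Fin d)))
    (hπ' : ∀ n, π' n = volume.withDensity
      (fun x => ENNReal.ofReal (Real.exp (-(2 / σ ^ 2) * fn n x) / Z n)))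
    (ZD : ℝ) (hZD : ZD = ∫ x in D, Real.exp (-(2 / σ ^ 2) * g x))
    (π : Measure (EuclideanSpace ℝ (Fin d)))
    (hπ : π = volume.withDensity
      (fun x => ENNReal.ofReal
        (D.indicator (fun y => Real.exp (-(2 / σ ^ 2) * g y)) x / ZD))) :
    Tendsto (fun n : ℕ => ∫ x, ‖x‖ ^ 2 ∂(π' n)) atTop
      (nhds (∫ x, ‖x‖ ^ 2 ∂π)) := by
  have hc : 0 < 2 / σ ^ 2 := by positivity
  set c := 2 / σ ^ 2
  obtain ⟨C, hC⟩ := hgsc.exists_quadratic_lower_bound hm hgc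
  have hI := integrable_one_add_norm_sq_mul_exp_neg hgc (a := m / 4) (by positivity) hc hC
  have hI0 : Integrable (fun x => Real.exp (-c * g x)) := by
    refine hI.mono' (by fun_prop) (Eventually.of_forall fun x => ?_)
    rw [Real.norm_of_nonneg (Real.exp_pos _).le]
    exact le_mul_of_one_le_left (Real.exp_pos _).le (by simp)
  have hI2 : Integrable (fun x => ‖x‖ ^ 2 * Real.exp (-c * g x)) := by
    refine (hI.sub hI0).congr (Eventually.of_forall fun x => ?_)
    simp only [Pi.sub_apply]
    ring
  have hZDpos : 0 < ZD := by
    rw [hZD, setIntegral_pos_iff_support_of_nonneg_ae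
      (Eventually.of_forall fun x => (Real.exp_pos _).le) hI0.integrableOn]
    have : Function.support (fun x => Real.exp (-c * g x)) = Set.univ := by
      ext x
      simp [(Real.exp_pos _).ne']
    rw [this, Set.univ_inter]
    exact Measure.measure_pos_of_nonempty_interior _ hDint
  have hlim0 := tendsto_integral_mul_exp_neg_penalized (μ := volume) hDne hDclosed hgc.measurable
    (measurable_const (a := (1 : ℝ))) hc (by simpa using hI0)
  have hlim2 := tendsto_integral_mul_exp_neg_penalized (μ := volume) hDne hDclosed hgc.measurable
    (h := fun x => ‖x‖ ^ 2) (by fun_prop) hc hI2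
  simp only [one_mul, integral_indicator hDclosed.measurableSet, ← hZD, ← hfn, ← hZ] at hlim0
  simp only [← hfn] at hlim2
  have hfnm : ∀ n, Measurable (fn n) := fun n => by
    have := (continuous_infDist_pt D).measurable
    rw [funext (hfn n)]
    fun_prop
  have hπint : ∫ x, ‖x‖ ^ 2 ∂π =
      (∫ x, ‖x‖ ^ 2 * D.indicator (fun y => Real.exp (-c * g y)) x) / ZD := by
    rw [hπ]
    exact integral_withDensity_ofReal_div
      (Measurable.indicator (by fun_prop) hDclosed.measurableSet)
      (Set.indicator_nonneg fun _ _ => (Real.exp_pos _).le) hZDpos.le _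
  have hπ'int : ∀ n, ∫ x, ‖x‖ ^ 2 ∂(π' n) =
      (∫ x, ‖x‖ ^ 2 * Real.exp (-c * fn n x)) / Z n := fun n => by
    have := hfnm n
    rw [hπ' n]
    refine integral_withDensity_ofReal_div (by fun_prop) (fun _ => (Real.exp_pos _).le) ?_ _
    rw [hZ n]
    exact integral_nonneg fun _ => (Real.exp_pos _).le
  simp only [hπint, hπ'int]
  exact hlim2.div hlim0 hZDpos.ne'
end
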